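/- arXiv:1006.2296 — 2 statements merged into one kernel-verified Lean document; each statement's English description precedes it below -/
import Mathlib

section
/- Let f : 𝔸^m → ℝ and g : 𝔸^{m'} → ℝ be C² Hamiltonian functions whose Hamiltonian vector fields X_f and X_g are complete. Then the Hamiltonian vector field of f ⊗ g on 𝔸^{m+m'} is complete, and for all x ∈ 𝔸^m, x' ∈ 𝔸^{m'} and t ∈ ℝ one has Φ_t^{f⊗g}(x, x') = (Φ_t^{g(x')·f}(x), Φ_t^{f(x)·g}(x')), where g(x')·f denotes the Hamiltonian f multiplied by the constant g(x') and f(x)·g denotes g multiplied by the constant f(x). -/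
open scoped BigOperators
open Real

noncomputable section

/-- The circle `𝕋 = ℝ/ℤ`. -/
abbrev T1 := AddCircle (1 : ℝ)

instance : Fact ((0 : ℝ) < 1) := ⟨one_pos⟩

/-- The annulus `𝔸^N = 𝕋^N × ℝ^N` with angle-action coordinates. -/
abbrev Ann (N : ℕ) := (Fin N → T1) × (Fin N → ℝ)

/-- Projection of the universal cover `ℝ^N × ℝ^N` onto the annulus `𝔸^N`. -/
noncomputable def projAnn (N : ℕ) : ((Fin N → ℝ) × (Fin N → ℝ)) → Ann N :=
  fun x => (fun i => (x.1 i : T1), x.2)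

/-- `Φ` is the complete flow of the Hamiltonian `H` on the annulus `𝔸^N`: it is a
one-parameter family of maps whose orbits lift to curves on the universal cover solving
Hamilton's equations `θ' = ∂H/∂I`, `I' = −∂H/∂θ`.  `Φ 1` is the time-one map `Φ^H`. -/
def IsHamFlow (N : ℕ) (H : Ann N → ℝ) (Φ : ℝ → Ann N → Ann N) : Prop :=
  (∀ x, Φ 0 x = x) ∧ (∀ s t : ℝ, ∀ x, Φ (s + t) x = Φ s (Φ t x)) ∧
    ∀ x : Ann N, ∃ c : ℝ → (Fin N → ℝ) × (Fin N → ℝ),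
      (∀ t, projAnn N (c t) = Φ t x) ∧
      ∀ t : ℝ, ∀ i : Fin N,
        HasDerivAt (fun s => (c s).1 i)
          (fderiv ℝ (H ∘ projAnn N) (c t) ((0 : Fin N → ℝ), Pi.single i 1)) t ∧
        HasDerivAt (fun s => (c s).2 i)
          (-(fderiv ℝ (H ∘ projAnn N) (c t) (Pi.single i 1, (0 : Fin N → ℝ)))) t
/-- `Φ` is the complete flow of the Hamiltonian `H` on the product annulus
`𝔸^M × 𝔸^{M'} ≅ 𝔸^{M+M'}`, defined through lifts to the universal cover. -/
def IsHamFlowProd (M M' : ℕ) (H : Ann M × Ann M' → ℝ)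
    (Φ : ℝ → Ann M × Ann M' → Ann M × Ann M') : Prop :=
  (∀ x, Φ 0 x = x) ∧ (∀ s t : ℝ, ∀ x, Φ (s + t) x = Φ s (Φ t x)) ∧
    ∀ x : Ann M × Ann M',
      ∃ c : ℝ → ((Fin M → ℝ) × (Fin M → ℝ)) × ((Fin M' → ℝ) × (Fin M' → ℝ)),
        (∀ t, (projAnn M (c t).1, projAnn M' (c t).2) = Φ t x) ∧
        ∀ t : ℝ,
          (∀ i : Fin M,
            HasDerivAt (fun s => (c s).1.1 i)
              (fderiv ℝ (fun y => H (projAnn M y.1, projAnn M' y.2)) (c t)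
                (((0 : Fin M → ℝ), Pi.single i 1), 0)) t ∧
            HasDerivAt (fun s => (c s).1.2 i)
              (-(fderiv ℝ (fun y => H (projAnn M y.1, projAnn M' y.2)) (c t)
                ((Pi.single i 1, (0 : Fin M → ℝ)), 0))) t) ∧
          (∀ j : Fin M',
            HasDerivAt (fun s => (c s).2.1 j)
              (fderiv ℝ (fun y => H (projAnn M y.1, projAnn M' y.2)) (c t)
                (0, ((0 : Fin M' → ℝ), Pi.single j 1))) t ∧
            HasDerivAt (fun s => (c s).2.2 j)
              (-(fderiv ℝ (fun y => H (projAnn M y.1, projAnn M' y.2)) (c t)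
                (0, (Pi.single j 1, (0 : Fin M' → ℝ))))) t)

/-!
The Hamiltonian vector field of `f ⊗ g` at `(p, p')` is `(g(p') X_f(p), f(p) X_g(p'))`. Along an
orbit each component is thus a time-dependent multiple of `X_f` resp. `X_g`, so `f` and `g` are
separately conserved. The scalar factors are therefore constant, and each component is an
orbit of `X_f` resp. `X_g` run at a constant speed.
-/

section IntegralCurve

variable {E : Type*} [NormedAddCommGroup E] [NormedSpace ℝ E]

theorem isIntegralCurve_eq_of_locallyLipschitz {V : E → E} (hV : LocallyLipschitz V)
    {c d : ℝ → E} (hc : IsIntegralCurve c fun _ ↦ V) (hd : IsIntegralCurve d fun _ ↦ V)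
    {t₀ : ℝ} (h₀ : c t₀ = d t₀) : c = d := by
  ext t
  obtain ⟨a, b, ht, ht₀⟩ : ∃ a b, t ∈ Set.Ioo a b ∧ t₀ ∈ Set.Ioo a b :=
    ⟨min t t₀ - 1, max t t₀ + 1, by grind, by grind⟩
  let K : Set E := c '' Set.Icc a b ∪ d '' Set.Icc a b
  have hK : IsCompact K :=
    (isCompact_Icc.image hc.continuous).union (isCompact_Icc.image hd.continuous)
  obtain ⟨L, hL⟩ := (hV.locallyLipschitzOn (s := K)).exists_lipschitzOnWith_of_compact hK
  exact ODE_solution_unique_of_mem_Ioo (v := fun _ ↦ V) (s := fun _ ↦ K) (fun _ _ ↦ hL) ht₀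
    (fun s hs ↦ ⟨hc s, .inl ⟨s, Set.Ioo_subset_Icc_self hs, rfl⟩⟩)
    (fun s hs ↦ ⟨hd s, .inr ⟨s, Set.Ioo_subset_Icc_self hs, rfl⟩⟩) h₀ ht

end IntegralCurve

theorem locallyLipschitz_fderiv_const_smul {E F : Type*} [NormedAddCommGroup E] [NormedSpace ℝ E]
    [NormedAddCommGroup F] [NormedSpace ℝ F] {f : E → F} (hf : LocallyLipschitz (fderiv ℝ f))
    (a : ℝ) : LocallyLipschitz (fderiv ℝ (a • f)) := by
  rw [fderiv_const_smul_field]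
  exact (lipschitzWith_smul a).locallyLipschitz.comp hf

section HamiltonianVectorField

/-- The phase space `ℝ^ι × ℝ^ι` with coordinates `(θ, I)`; for `ι = Fin N` it is the universal
cover of the annulus `𝔸^N`. -/
abbrev PhaseSpace (ι : Type*) := (ι → ℝ) × (ι → ℝ)

variable {ι : Type*} [Fintype ι] [DecidableEq ι]

/-- The linear map from covectors to vectors induced by the standard symplectic form, with the
sign for which `dH` is sent to `(∂H/∂I, -∂H/∂θ)`. -/
def symplecticSharp (ι : Type*) [Fintype ι] [DecidableEq ι] :
    (PhaseSpace ι →L[ℝ] ℝ) →L[ℝ] PhaseSpace ι :=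
  (ContinuousLinearMap.pi fun i ↦
      ContinuousLinearMap.apply ℝ ℝ ((0, Pi.single i 1) : PhaseSpace ι)).prod
    (ContinuousLinearMap.pi fun i ↦
      -ContinuousLinearMap.apply ℝ ℝ ((Pi.single i 1, 0) : PhaseSpace ι))

theorem symplecticSharp_apply (ℓ : PhaseSpace ι →L[ℝ] ℝ) :
    symplecticSharp ι ℓ = (fun i ↦ ℓ (0, Pi.single i 1), fun i ↦ -ℓ (Pi.single i 1, 0)) :=
  rfl

theorem apply_symplecticSharp_self (ℓ : PhaseSpace ι →L[ℝ] ℝ) : ℓ (symplecticSharp ι ℓ) = 0 := by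
  have expand (u v : ι → ℝ) :
      ℓ (u, v) = ∑ i, (u i * ℓ (Pi.single i 1, 0) + v i * ℓ (0, Pi.single i 1)) := by
    have h_basis : (u, v) =
        ∑ i, (u i • (Pi.single i 1, 0) + v i • (0, Pi.single i 1) : PhaseSpace ι) := by
      ext i <;> simp [Prod.fst_sum, Prod.snd_sum, Pi.single_apply]
    simp only [h_basis, map_sum, map_add, map_smul, smul_eq_mul]
  rw [symplecticSharp_apply, expand]
  exact Finset.sum_eq_zero fun i _ ↦ by ring

theorem hasDerivAt_symplecticSharp_iff {c : ℝ → PhaseSpace ι} {ℓ : PhaseSpace ι →L[ℝ] ℝ}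
    {t : ℝ} :
    HasDerivAt c (symplecticSharp ι ℓ) t ↔
      ∀ i, HasDerivAt (fun s ↦ (c s).1 i) (ℓ (0, Pi.single i 1)) t ∧
        HasDerivAt (fun s ↦ (c s).2 i) (-ℓ (Pi.single i 1, 0)) t := by
  refine ⟨fun h i ↦ ?_, fun h ↦ ?_⟩
  · have hθ : HasDerivAt (fun s ↦ (c s).1) (symplecticSharp ι ℓ).1 t :=
      (ContinuousLinearMap.fst ℝ (ι → ℝ) (ι → ℝ)).hasFDerivAt.comp_hasDerivAt t h
    have hI : HasDerivAt (fun s ↦ (c s).2) (symplecticSharp ι ℓ).2 t :=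
      (ContinuousLinearMap.snd ℝ (ι → ℝ) (ι → ℝ)).hasFDerivAt.comp_hasDerivAt t h
    exact ⟨hasDerivAt_pi.1 hθ i, hasDerivAt_pi.1 hI i⟩
  · exact (hasDerivAt_pi.2 fun i ↦ (h i).1).prodMk (hasDerivAt_pi.2 fun i ↦ (h i).2)

/-- The Hamiltonian vector field `X_F = (∂F/∂I, -∂F/∂θ)` of a function `F` on phase space. -/
def hamVectorField (F : PhaseSpace ι → ℝ) (p : PhaseSpace ι) : PhaseSpace ι :=
  symplecticSharp ι (fderiv ℝ F p)

theorem hamVectorField_const_smul (a : ℝ) (F : PhaseSpace ι → ℝ) :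
    hamVectorField (a • F) = a • hamVectorField F := by
  ext1 p
  simp only [hamVectorField, fderiv_const_smul_field, Pi.smul_apply, map_smul]

theorem hamVectorField_comp_add_right (F : PhaseSpace ι → ℝ) (v p : PhaseSpace ι) :
    hamVectorField (fun q ↦ F (q + v)) p = hamVectorField F (p + v) := by
  simp only [hamVectorField, fderiv_comp_add_right]

theorem locallyLipschitz_hamVectorField {F : PhaseSpace ι → ℝ}
    (hF : LocallyLipschitz (fderiv ℝ F)) : LocallyLipschitz (hamVectorField F) :=
  (symplecticSharp ι).lipschitz.locallyLipschitz.comp hF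

theorem apply_eq_of_isIntegralCurve_hamVectorField_smul {F : PhaseSpace ι → ℝ}
    (hF : Differentiable ℝ F) {a : ℝ → ℝ} {c : ℝ → PhaseSpace ι}
    (hc : IsIntegralCurve c fun t ↦ hamVectorField (a t • F)) (s t : ℝ) : F (c s) = F (c t) := by
  have hderiv (r : ℝ) : HasDerivAt (F ∘ c) 0 r := by
    have h : HasDerivAt (F ∘ c) (fderiv ℝ F (c r) (hamVectorField (a r • F) (c r))) r :=
      (hF (c r)).hasFDerivAt.comp_hasDerivAt r (hc r)
    rwa [hamVectorField_const_smul, Pi.smul_apply, map_smul, hamVectorField,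
      apply_symplecticSharp_self, smul_zero] at h
  exact is_const_of_deriv_eq_zero (fun r ↦ (hderiv r).differentiableAt)
    (fun r ↦ (hderiv r).deriv) s t

end HamiltonianVectorField

section Annulus

variable {N : ℕ}

theorem projAnn_add_sub {p q : PhaseSpace (Fin N)} (h : projAnn N p = projAnn N q)
    (y : PhaseSpace (Fin N)) : projAnn N (y + (p - q)) = projAnn N y := by
  have hθ (i : Fin N) : (p.1 i : T1) = q.1 i := congrFun (congrArg Prod.fst h) i
  have hI : (projAnn N p).2 = (projAnn N q).2 := congrArg Prod.snd h
  ext i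
  · simp [projAnn, hθ i]
  · simpa [projAnn, sub_eq_zero] using congrFun hI i

theorem projAnn_eq_of_isIntegralCurve {H : Ann N → ℝ}
    (hH : LocallyLipschitz (fderiv ℝ (H ∘ projAnn N))) {c d : ℝ → PhaseSpace (Fin N)}
    (hc : IsIntegralCurve c fun _ ↦ hamVectorField (H ∘ projAnn N))
    (hd : IsIntegralCurve d fun _ ↦ hamVectorField (H ∘ projAnn N))
    {t₀ : ℝ} (h₀ : projAnn N (c t₀) = projAnn N (d t₀)) (t : ℝ) :
    projAnn N (c t) = projAnn N (d t) := by
  set v := c t₀ - d t₀ with hv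
  have proj_add (p : PhaseSpace (Fin N)) : projAnn N (p + v) = projAnn N p := projAnn_add_sub h₀ p
  have hperiod (p : PhaseSpace (Fin N)) :
      hamVectorField (H ∘ projAnn N) (p + v) = hamVectorField (H ∘ projAnn N) p := by
    simp only [← hamVectorField_comp_add_right, Function.comp_def, proj_add]
  have hd_add : IsIntegralCurve (fun s ↦ d s + v) fun _ ↦ hamVectorField (H ∘ projAnn N) :=
    fun s ↦ by simpa only [hperiod] using (hd s).add_const v
  have hcd : c = fun s ↦ d s + v := isIntegralCurve_eq_of_locallyLipschitz
    (locallyLipschitz_hamVectorField hH) hc hd_add (t₀ := t₀) (by simp [hv])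
  rw [hcd, proj_add]

theorem isHamFlow_iff {H : Ann N → ℝ} {Φ : ℝ → Ann N → Ann N} :
    IsHamFlow N H Φ ↔ (∀ x, Φ 0 x = x) ∧ (∀ s t x, Φ (s + t) x = Φ s (Φ t x)) ∧
      ∀ x, ∃ c : ℝ → PhaseSpace (Fin N), (∀ t, projAnn N (c t) = Φ t x) ∧
        IsIntegralCurve c fun _ ↦ hamVectorField (H ∘ projAnn N) := by
  simp only [IsIntegralCurve, hamVectorField, hasDerivAt_symplecticSharp_iff]
  rfl

namespace IsHamFlow

variable {H : Ann N → ℝ} {Φ : ℝ → Ann N → Ann N}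

theorem const_mul (hΦ : IsHamFlow N H Φ) (a : ℝ) :
    IsHamFlow N (fun x ↦ a * H x) fun t ↦ Φ (t * a) := by
  obtain ⟨hzero, hadd, hlift⟩ := isHamFlow_iff.1 hΦ
  refine isHamFlow_iff.2 ⟨by simpa using hzero, by simp [add_mul, hadd], fun x ↦ ?_⟩
  obtain ⟨c, hproj, hc⟩ := hlift x
  refine ⟨c ∘ (· * a), fun t ↦ hproj (t * a), ?_⟩
  have hsmul : hamVectorField ((fun x ↦ a * H x) ∘ projAnn N) =
      a • hamVectorField (H ∘ projAnn N) := hamVectorField_const_smul a _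
  rw [hsmul]
  exact hc.comp_mul a

theorem hamiltonian_apply (hΦ : IsHamFlow N H Φ) (hH : Differentiable ℝ (H ∘ projAnn N))
    (t : ℝ) (x : Ann N) : H (Φ t x) = H x := by
  obtain ⟨hzero, -, hlift⟩ := isHamFlow_iff.1 hΦ
  obtain ⟨c, hproj, hc⟩ := hlift x
  have hconst := apply_eq_of_isIntegralCurve_hamVectorField_smul hH (a := 1) (by simpa using hc) t 0
  simpa only [Function.comp_apply, hproj, hzero] using hconst

theorem apply_projAnn_of_isIntegralCurve (hΦ : IsHamFlow N H Φ)
    (hH : LocallyLipschitz (fderiv ℝ (H ∘ projAnn N))) {c : ℝ → PhaseSpace (Fin N)}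
    (hc : IsIntegralCurve c fun _ ↦ hamVectorField (H ∘ projAnn N)) (t : ℝ) :
    Φ t (projAnn N (c 0)) = projAnn N (c t) := by
  obtain ⟨hzero, -, hlift⟩ := isHamFlow_iff.1 hΦ
  obtain ⟨d, hproj, hd⟩ := hlift (projAnn N (c 0))
  rw [← hproj]
  exact projAnn_eq_of_isIntegralCurve hH hd hc (by rw [hproj, hzero]) t

end IsHamFlow

end Annulus

section Product

variable {M M' : ℕ}

theorem isHamFlowProd_iff {H : Ann M × Ann M' → ℝ}
    (hH : Differentiable ℝ fun y : PhaseSpace (Fin M) × PhaseSpace (Fin M') ↦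
      H (projAnn M y.1, projAnn M' y.2))
    {Φ : ℝ → Ann M × Ann M' → Ann M × Ann M'} :
    IsHamFlowProd M M' H Φ ↔
      (∀ x, Φ 0 x = x) ∧ (∀ s t x, Φ (s + t) x = Φ s (Φ t x)) ∧
      ∀ x, ∃ c : ℝ → PhaseSpace (Fin M) × PhaseSpace (Fin M'),
        (∀ t, (projAnn M (c t).1, projAnn M' (c t).2) = Φ t x) ∧
        IsIntegralCurve (fun t ↦ (c t).1)
          (fun t ↦ hamVectorField fun p ↦ H (projAnn M p, projAnn M' (c t).2)) ∧
        IsIntegralCurve (fun t ↦ (c t).2)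
          (fun t ↦ hamVectorField fun p' ↦ H (projAnn M (c t).1, projAnn M' p')) := by
  let K (y : PhaseSpace (Fin M) × PhaseSpace (Fin M')) := H (projAnn M y.1, projAnn M' y.2)
  have fderiv_left (y : PhaseSpace (Fin M) × PhaseSpace (Fin M')) :
      fderiv ℝ (fun p ↦ H (projAnn M p, projAnn M' y.2)) y.1 = (fderiv ℝ K y).comp (.inl ℝ _ _) :=
    (HasFDerivAt.comp (g := K) (f := (·, y.2)) y.1 (hH y).hasFDerivAt
      (hasFDerivAt_prodMk_left y.1 y.2)).fderiv
  have fderiv_right (y : PhaseSpace (Fin M) × PhaseSpace (Fin M')) :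
      fderiv ℝ (fun p' ↦ H (projAnn M y.1, projAnn M' p')) y.2 = (fderiv ℝ K y).comp (.inr ℝ _ _) :=
    (HasFDerivAt.comp (g := K) (f := (y.1, ·)) y.2 (hH y).hasFDerivAt
      (hasFDerivAt_prodMk_right y.1 y.2)).fderiv
  simp only [IsHamFlowProd, IsIntegralCurve, hamVectorField, fderiv_left, fderiv_right,
    hasDerivAt_symplecticSharp_iff, forall_and]
  rfl

variable {f : Ann M → ℝ} {g : Ann M' → ℝ}

theorem differentiable_tensor_projAnn (hf : Differentiable ℝ (f ∘ projAnn M))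
    (hg : Differentiable ℝ (g ∘ projAnn M')) :
    Differentiable ℝ fun y : PhaseSpace (Fin M) × PhaseSpace (Fin M') ↦
      f (projAnn M y.1) * g (projAnn M' y.2) :=
  (hf.comp differentiable_fst).mul (hg.comp differentiable_snd)

theorem IsHamFlow.tensor {Φf : ℝ → Ann M → Ann M} {Φg : ℝ → Ann M' → Ann M'}
    (hΦf : IsHamFlow M f Φf) (hΦg : IsHamFlow M' g Φg)
    (hf : Differentiable ℝ (f ∘ projAnn M)) (hg : Differentiable ℝ (g ∘ projAnn M')) :
    IsHamFlowProd M M' (fun z ↦ f z.1 * g z.2)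
      fun t z ↦ (Φf (t * g z.2) z.1, Φg (t * f z.1) z.2) := by
  have f_conserved := hΦf.hamiltonian_apply hf
  have g_conserved := hΦg.hamiltonian_apply hg
  refine (isHamFlowProd_iff (differentiable_tensor_projAnn hf hg)).2
    ⟨fun z ↦ ?_, fun s t z ↦ ?_, fun (x, x') ↦ ?_⟩
  · simp [hΦf.1, hΦg.1]
  · simp only [f_conserved, g_conserved, add_mul, hΦf.2.1, hΦg.2.1]
  · obtain ⟨c, c_proj, hc⟩ := (isHamFlow_iff.1 (hΦf.const_mul (g x'))).2.2 x
    obtain ⟨d, d_proj, hd⟩ := (isHamFlow_iff.1 (hΦg.const_mul (f x))).2.2 x'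
    refine ⟨fun t ↦ (c t, d t), fun t ↦ Prod.ext (c_proj t) (d_proj t), ?_, ?_⟩
    · simpa only [d_proj, g_conserved, mul_comm, Function.comp_def] using hc
    · simpa only [c_proj, f_conserved, Function.comp_def] using hd

theorem IsHamFlowProd.exists_lift_of_tensor {Φ : ℝ → Ann M × Ann M' → Ann M × Ann M'}
    (hΦ : IsHamFlowProd M M' (fun z ↦ f z.1 * g z.2) Φ)
    (hf : Differentiable ℝ (f ∘ projAnn M)) (hg : Differentiable ℝ (g ∘ projAnn M'))
    (x : Ann M) (x' : Ann M') :
    ∃ (c : ℝ → PhaseSpace (Fin M)) (d : ℝ → PhaseSpace (Fin M')),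
      (∀ t, (projAnn M (c t), projAnn M' (d t)) = Φ t (x, x')) ∧
      IsIntegralCurve c (fun _ ↦ hamVectorField ((fun z ↦ g x' * f z) ∘ projAnn M)) ∧
      IsIntegralCurve d (fun _ ↦ hamVectorField ((fun z ↦ f x * g z) ∘ projAnn M')) := by
  obtain ⟨hzero, -, hlift⟩ := (isHamFlowProd_iff (differentiable_tensor_projAnn hf hg)).1 hΦ
  obtain ⟨y, hproj, hc, hd⟩ := hlift (x, x')
  obtain ⟨c_zero, d_zero⟩ := Prod.mk.inj ((hproj 0).trans (hzero _))
  have f_const (t : ℝ) : f (projAnn M (y t).1) = f x := by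
    rw [← c_zero]
    refine apply_eq_of_isIntegralCurve_hamVectorField_smul hf (c := fun t ↦ (y t).1)
      (a := fun t ↦ g (projAnn M' (y t).2)) ?_ t 0
    simpa only [Pi.smul_def, Function.comp_apply, smul_eq_mul, mul_comm] using hc
  have g_const (t : ℝ) : g (projAnn M' (y t).2) = g x' := by
    rw [← d_zero]
    exact apply_eq_of_isIntegralCurve_hamVectorField_smul hg (c := fun t ↦ (y t).2)
      (a := fun t ↦ f (projAnn M (y t).1)) hd t 0
  refine ⟨fun t ↦ (y t).1, fun t ↦ (y t).2, hproj, ?_, ?_⟩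
  · simpa only [g_const, mul_comm, Function.comp_def] using hc
  · simpa only [f_const, Function.comp_def] using hd

end Product

theorem tensor_flow_splitting_general (m m' : ℕ)
    (f : Ann m → ℝ) (g : Ann m' → ℝ)
    (hf : Differentiable ℝ (f ∘ projAnn m)) (hg : Differentiable ℝ (g ∘ projAnn m'))
    (hf' : LocallyLipschitz (fderiv ℝ (f ∘ projAnn m)))
    (hg' : LocallyLipschitz (fderiv ℝ (g ∘ projAnn m')))
    (hcf : ∃ Φ : ℝ → Ann m → Ann m, IsHamFlow m f Φ)
    (hcg : ∃ Φ : ℝ → Ann m' → Ann m', IsHamFlow m' g Φ) :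
    (∃ Φ : ℝ → Ann m × Ann m' → Ann m × Ann m',
      IsHamFlowProd m m' (fun z => f z.1 * g z.2) Φ) ∧
    (∀ x' : Ann m', ∃ Φ₁ : ℝ → Ann m → Ann m,
      IsHamFlow m (fun z => g x' * f z) Φ₁) ∧
    (∀ x : Ann m, ∃ Φ₂ : ℝ → Ann m' → Ann m',
      IsHamFlow m' (fun z => f x * g z) Φ₂) ∧
    ∀ Φ : ℝ → Ann m × Ann m' → Ann m × Ann m',
      IsHamFlowProd m m' (fun z => f z.1 * g z.2) Φ →
      ∀ x : Ann m, ∀ x' : Ann m',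
        ∀ Φ₁ : ℝ → Ann m → Ann m, IsHamFlow m (fun z => g x' * f z) Φ₁ →
        ∀ Φ₂ : ℝ → Ann m' → Ann m', IsHamFlow m' (fun z => f x * g z) Φ₂ →
        ∀ t : ℝ, Φ t (x, x') = (Φ₁ t x, Φ₂ t x') := by
  obtain ⟨Φf, hΦf⟩ := hcf
  obtain ⟨Φg, hΦg⟩ := hcg
  refine ⟨⟨_, hΦf.tensor hΦg hf hg⟩, fun x' ↦ ⟨_, hΦf.const_mul (g x')⟩,
    fun x ↦ ⟨_, hΦg.const_mul (f x)⟩, fun Φ hΦ x x' Φ₁ hΦ₁ Φ₂ hΦ₂ t ↦ ?_⟩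
  obtain ⟨c, d, hproj, hc, hd⟩ := hΦ.exists_lift_of_tensor hf hg x x'
  obtain ⟨rfl, rfl⟩ := Prod.mk.inj ((hproj 0).trans (hΦ.1 _))
  rw [← hproj t, hΦ₁.apply_projAnn_of_isIntegralCurve (locallyLipschitz_fderiv_const_smul hf' _) hc,
    hΦ₂.apply_projAnn_of_isIntegralCurve (locallyLipschitz_fderiv_const_smul hg' _) hd]

/-- Splitting of the flow of a product Hamiltonian `f ⊗ g`: if `X_f` and `X_g` are
complete, then `X_{f⊗g}` is complete and
`Φ_t^{f⊗g}(x, x') = (Φ_t^{g(x')·f}(x), Φ_t^{f(x)·g}(x'))`. -/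
theorem tensor_flow_splitting (m m' : ℕ)
    (f : Ann m → ℝ) (g : Ann m' → ℝ)
    (hf : ContDiff ℝ 2 (f ∘ projAnn m)) (hg : ContDiff ℝ 2 (g ∘ projAnn m'))
    (hcf : ∃ Φ : ℝ → Ann m → Ann m, IsHamFlow m f Φ)
    (hcg : ∃ Φ : ℝ → Ann m' → Ann m', IsHamFlow m' g Φ) :
    (∃ Φ : ℝ → Ann m × Ann m' → Ann m × Ann m',
      IsHamFlowProd m m' (fun z => f z.1 * g z.2) Φ) ∧
    (∀ x' : Ann m', ∃ Φ₁ : ℝ → Ann m → Ann m,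
      IsHamFlow m (fun z => g x' * f z) Φ₁) ∧
    (∀ x : Ann m, ∃ Φ₂ : ℝ → Ann m' → Ann m',
      IsHamFlow m' (fun z => f x * g z) Φ₂) ∧
    ∀ Φ : ℝ → Ann m × Ann m' → Ann m × Ann m',
      IsHamFlowProd m m' (fun z => f z.1 * g z.2) Φ →
      ∀ x : Ann m, ∀ x' : Ann m',
        ∀ Φ₁ : ℝ → Ann m → Ann m, IsHamFlow m (fun z => g x' * f z) Φ₁ →
        ∀ Φ₂ : ℝ → Ann m' → Ann m', IsHamFlow m' (fun z => f x * g z) Φ₂ →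
        ∀ t : ℝ, Φ t (x, x') = (Φ₁ t x, Φ₂ t x') := by
  exact tensor_flow_splitting_general m m' f g (hf.differentiable two_ne_zero)
    (hg.differentiable two_ne_zero) (hf.fderiv_right le_rfl).locallyLipschitz
    (hg.fderiv_right le_rfl).locallyLipschitz hcf hcg
end
end

section
/- Let σ = −1/2 + (2/π)·arctan(e^π), so 0 < σ < 1/2. Let P(θ, I) = ½I² − cos(2πθ) be the pendulum on 𝕋 × ℝ, let M ∈ ℕ*, let I_M ∈ (2,3) be the unique value for which (0, I_M) is M-periodic for Φ^P (equivalently, whose rotational orbit has traversal time M), and write Φ_t^P(0, I_M) = (θ_M(t), I_M(t)). Then for every t ∈ [1/2, M − 1/2], the angle θ_M(t) ∈ 𝕋 does not lie in the arc [−σ, σ] (mod 1). -/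
/-!
A rotational orbit and the separatrix `I² = 4 cos² (πθ)` both start over the angle `0`, and over
each angle the rotational orbit is the faster one. Hence the rotational orbit has passed the angle
that the separatrix attains at time `s` strictly before time `s`; for `s = 1/2` that angle is `σ`.
By the symmetry `θ ↦ 1 - θ` of the speed, the rotational orbit likewise needs less than time `1/2`
to travel from `1 - σ` to `1`.
-/

open scoped BigOperators
open Real

noncomputable section

/-- The canonical representative in `[0,1)` of a point of the circle. -/
noncomputable def rep (θ : T1) : ℝ := ((AddCircle.equivIco 1 0) θ).1

/-- The function `θ ↦ cos (2πθ)` on the circle. -/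
noncomputable def cosC (θ : T1) : ℝ := Real.cos (2 * Real.pi * rep θ)

/-- Projection of the universal cover `ℝ × ℝ` onto the annulus `𝕋 × ℝ`. -/
noncomputable def projA1 : ℝ × ℝ → T1 × ℝ := fun x => ((x.1 : T1), x.2)

/-- `Φ` is the complete flow of the Hamiltonian `H` on the annulus `𝕋 × ℝ`: it is a
one-parameter family of maps whose orbits lift to curves on the universal cover solving
Hamilton's equations `θ' = ∂H/∂I`, `I' = −∂H/∂θ`. -/
def IsHamFlow1 (H : T1 × ℝ → ℝ) (Φ : ℝ → T1 × ℝ → T1 × ℝ) : Prop :=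
  (∀ x, Φ 0 x = x) ∧ (∀ s t : ℝ, ∀ x, Φ (s + t) x = Φ s (Φ t x)) ∧
    ∀ x : T1 × ℝ, ∃ c : ℝ → ℝ × ℝ,
      (∀ t, projA1 (c t) = Φ t x) ∧
      ∀ t : ℝ,
        HasDerivAt (fun s => (c s).1) (fderiv ℝ (H ∘ projA1) (c t) (0, 1)) t ∧
        HasDerivAt (fun s => (c s).2) (-(fderiv ℝ (H ∘ projA1) (c t) (1, 0))) t

/-- The pendulum Hamiltonian `P(θ, I) = ½I² − cos(2πθ)` on `𝕋 × ℝ`. -/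
noncomputable def Pend : T1 × ℝ → ℝ := fun z => (1 / 2) * z.2 ^ 2 + (-cosC z.1)

/-- The traversal time `T(I₀) = ∫₀¹ dθ/√(I₀² − 4 sin²(πθ))` of the rotational pendulum
orbit through `(0, I₀)`, for `I₀ > 2`. -/
noncomputable def traversalTime (I₀ : ℝ) : ℝ :=
  ∫ θ in (0 : ℝ)..1, (Real.sqrt (I₀ ^ 2 - 4 * Real.sin (Real.pi * θ) ^ 2))⁻¹

/-- The constant `σ = −1/2 + (2/π)·arctan(e^π)`. -/
noncomputable def sigmaConst : ℝ := -(1 / 2) + (2 / Real.pi) * Real.arctan (Real.exp Real.pi)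

section Circle

theorem coe_notMem_image_coe_Icc {𝕜 : Type*} [AddCommGroup 𝕜] [LinearOrder 𝕜]
    [IsOrderedAddMonoid 𝕜] [Archimedean 𝕜] {p : 𝕜} [Fact (0 < p)] {a b x : 𝕜}
    (hbx : b < x) (hxa : x < a + p) :
    (x : AddCircle p) ∉ (fun r : 𝕜 => (r : AddCircle p)) '' Set.Icc a b := by
  rintro ⟨r, ⟨har, hrb⟩, hrx⟩
  have hlt : r < x := hrb.trans_lt hbx
  have heq : r = x := (AddCircle.coe_eq_coe_iff_of_mem_Ico
    ⟨har, hlt.trans hxa⟩ ⟨har.trans hlt.le, hxa⟩).1 hrx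
  exact hlt.ne heq

theorem cosC_coe (x : ℝ) : cosC (x : T1) = cos (2 * π * x) := by
  have hrep : rep (x : T1) = x - ⌊x⌋ := by
    rw [rep, AddCircle.coe_equivIco_mk_apply, div_one, mul_one, Int.fract]
  rw [cosC, hrep, mul_sub, mul_comm (2 * π) (⌊x⌋ : ℝ), cos_sub_int_mul_two_pi]

end Circle

section Flow

theorem Pend_comp_projA1 :
    Pend ∘ projA1 = fun p : ℝ × ℝ => (1 / 2) * p.2 ^ 2 + -cos (2 * π * p.1) := by
  funext p
  simp only [Function.comp_apply, Pend, projA1, cosC_coe]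

theorem fderiv_Pend_comp_projA1_apply (p v : ℝ × ℝ) :
    fderiv ℝ (Pend ∘ projA1) p v = p.2 * v.2 + 2 * π * sin (2 * π * p.1) * v.1 := by
  have hfst : HasFDerivAt Prod.fst (ContinuousLinearMap.fst ℝ ℝ ℝ) p := hasFDerivAt_fst
  have hsnd : HasFDerivAt Prod.snd (ContinuousLinearMap.snd ℝ ℝ ℝ) p := hasFDerivAt_snd
  have hP := ((hsnd.pow 2).const_mul (1 / 2)).add ((hfst.const_mul (2 * π)).cos.neg)
  rw [Pend_comp_projA1]
  refine (congrArg (fun L : ℝ × ℝ →L[ℝ] ℝ => L v) hP.fderiv).trans ?_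
  simp
  ring

/-- The curve `t ↦ (θ t, J t)` on the universal cover `ℝ × ℝ` solves Hamilton's equations of the
pendulum. -/
structure IsPendulumSolution (θ J : ℝ → ℝ) : Prop where
  hasDerivAt_angle : ∀ t, HasDerivAt θ (J t) t
  hasDerivAt_action : ∀ t, HasDerivAt J (-(2 * π * sin (2 * π * θ t))) t

theorem IsPendulumSolution.sub_int {θ J : ℝ → ℝ} (h : IsPendulumSolution θ J) (n : ℤ) :
    IsPendulumSolution (fun t => θ t - n) J where
  hasDerivAt_angle t := (h.hasDerivAt_angle t).sub_const _
  hasDerivAt_action t := by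
    rw [mul_sub, mul_comm (2 * π) (n : ℝ), sin_sub_int_mul_two_pi]
    exact h.hasDerivAt_action t

theorem IsHamFlow1.exists_isPendulumSolution {Φ : ℝ → T1 × ℝ → T1 × ℝ} (hΦ : IsHamFlow1 Pend Φ)
    (a I₀ : ℝ) :
    ∃ θ J : ℝ → ℝ, IsPendulumSolution θ J ∧ θ 0 = a ∧ J 0 = I₀ ∧
      ∀ t, Φ t ((a : T1), I₀) = ((θ t : T1), J t) := by
  obtain ⟨hΦ0, -, hlift⟩ := hΦ
  obtain ⟨c, hproj, hderiv⟩ := hlift ((a : T1), I₀)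
  have hc : IsPendulumSolution (fun t => (c t).1) (fun t => (c t).2) :=
    ⟨fun t => by simpa [fderiv_Pend_comp_projA1_apply] using (hderiv t).1,
      fun t => by simpa [fderiv_Pend_comp_projA1_apply] using (hderiv t).2⟩
  have hc0 : projA1 (c 0) = ((a : T1), I₀) := (hproj 0).trans (hΦ0 _)
  have hangle : (((c 0).1 - a : ℝ) : T1) = 0 := by
    rw [AddCircle.coe_sub, sub_eq_zero]
    exact congrArg Prod.fst hc0
  obtain ⟨n, hn⟩ := (AddCircle.coe_eq_zero_iff (1 : ℝ)).1 hangle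
  rw [zsmul_one] at hn
  have hn0 : ((n : ℝ) : T1) = 0 := (AddCircle.coe_eq_zero_iff (1 : ℝ)).2 ⟨n, zsmul_one n⟩
  refine ⟨_, _, hc.sub_int n, by linarith, congrArg Prod.snd hc0, fun t => ?_⟩
  rw [← hproj t, projA1, AddCircle.coe_sub, hn0, sub_zero]

end Flow

section ArrivalTime

/-- The speed at the angle `x` of the rotational pendulum orbit through `(0, I₀)`, `2 < I₀`, as
given by conservation of energy. -/
def rotationalSpeed (I₀ x : ℝ) : ℝ := √(I₀ ^ 2 - 4 * sin (π * x) ^ 2)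

/-- The time at which the rotational pendulum orbit that starts at `(0, I₀)` reaches the lifted
angle `x`; it is negative for `x < 0`. -/
def arrivalTime (I₀ x : ℝ) : ℝ := ∫ y in (0 : ℝ)..x, (rotationalSpeed I₀ y)⁻¹

theorem arrivalTime_zero (I₀ : ℝ) : arrivalTime I₀ 0 = 0 :=
  intervalIntegral.integral_same

theorem rotationalSpeed_one_sub (I₀ x : ℝ) : rotationalSpeed I₀ (1 - x) = rotationalSpeed I₀ x := by
  rw [rotationalSpeed, mul_sub, mul_one, sin_pi_sub, rotationalSpeed]

variable {I₀ : ℝ}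

theorem two_mul_cos_lt_rotationalSpeed (hI₀ : 2 < I₀) (x : ℝ) :
    2 * cos (π * x) < rotationalSpeed I₀ x := by
  apply lt_sqrt_of_sq_lt
  nlinarith [sin_sq_add_cos_sq (π * x)]

theorem rotationalSpeed_pos (hI₀ : 2 < I₀) (x : ℝ) : 0 < rotationalSpeed I₀ x := by
  apply sqrt_pos.2
  nlinarith [sin_sq_le_one (π * x)]

theorem continuous_inv_rotationalSpeed (hI₀ : 2 < I₀) :
    Continuous fun x => (rotationalSpeed I₀ x)⁻¹ := by
  have hcont : Continuous (rotationalSpeed I₀) := by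
    unfold rotationalSpeed
    fun_prop
  exact hcont.inv₀ fun x => (rotationalSpeed_pos hI₀ x).ne'

theorem hasDerivAt_arrivalTime (hI₀ : 2 < I₀) (x : ℝ) :
    HasDerivAt (arrivalTime I₀) (rotationalSpeed I₀ x)⁻¹ x :=
  (continuous_inv_rotationalSpeed hI₀).integral_hasStrictDerivAt 0 x |>.hasDerivAt

theorem strictMono_arrivalTime (hI₀ : 2 < I₀) : StrictMono (arrivalTime I₀) :=
  strictMono_of_hasDerivAt_pos (hasDerivAt_arrivalTime hI₀) fun x =>
    inv_pos.2 (rotationalSpeed_pos hI₀ x)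

theorem arrivalTime_one_sub (hI₀ : 2 < I₀) (x : ℝ) :
    arrivalTime I₀ (1 - x) = traversalTime I₀ - arrivalTime I₀ x := by
  have hint := (continuous_inv_rotationalSpeed hI₀).intervalIntegrable (μ := MeasureTheory.volume)
  have hrefl : ∫ y in (1 - x)..1, (rotationalSpeed I₀ y)⁻¹ = arrivalTime I₀ x := by
    simpa only [sub_zero, rotationalSpeed_one_sub, arrivalTime] using
      (intervalIntegral.integral_comp_sub_left (a := 0) (b := x)
        (fun y => (rotationalSpeed I₀ y)⁻¹) 1).symm
  rw [← hrefl, eq_sub_iff_add_eq]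
  exact intervalIntegral.integral_add_adjacent_intervals (hint 0 (1 - x)) (hint (1 - x) 1)

end ArrivalTime

namespace IsPendulumSolution

variable {θ J : ℝ → ℝ}

theorem sq_action_sub_cos_eq (h : IsPendulumSolution θ J) (s t : ℝ) :
    J s ^ 2 - 2 * cos (2 * π * θ s) = J t ^ 2 - 2 * cos (2 * π * θ t) := by
  have hE (u : ℝ) : HasDerivAt (fun u => J u ^ 2 - 2 * cos (2 * π * θ u)) 0 u := by
    refine HasDerivAt.congr_deriv (((h.hasDerivAt_action u).pow 2).sub
      (((h.hasDerivAt_angle u).const_mul (2 * π)).cos.const_mul 2)) ?_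
    simp
    ring
  exact is_const_of_deriv_eq_zero (fun u => (hE u).differentiableAt) (fun u => (hE u).deriv) s t

theorem sq_action_eq (h : IsPendulumSolution θ J) (h0 : θ 0 = 0) (t : ℝ) :
    J t ^ 2 = J 0 ^ 2 - 4 * sin (π * θ t) ^ 2 := by
  have hE := h.sq_action_sub_cos_eq t 0
  rw [h0, mul_zero, cos_zero, mul_assoc, cos_two_mul, cos_sq'] at hE
  linarith

theorem action_pos (h : IsPendulumSolution θ J) (h0 : θ 0 = 0) (hJ : 2 < J 0) (t : ℝ) :
    0 < J t := by
  have hne (s : ℝ) : J s ≠ 0 := by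
    rw [← sq_pos_iff, h.sq_action_eq h0]
    exact sqrt_pos.1 (rotationalSpeed_pos hJ (θ s))
  have hcont : Continuous J :=
    continuous_iff_continuousAt.2 fun s => (h.hasDerivAt_action s).continuousAt
  by_contra! ht
  obtain ⟨s, hs⟩ : (0 : ℝ) ∈ Set.range J :=
    mem_range_of_exists_le_of_exists_ge hcont ⟨t, ht⟩ ⟨0, by linarith⟩
  exact hne s hs

theorem rotationalSpeed_angle (h : IsPendulumSolution θ J) (h0 : θ 0 = 0) (hJ : 2 < J 0) (t : ℝ) :
    rotationalSpeed (J 0) (θ t) = J t := by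
  rw [rotationalSpeed, ← h.sq_action_eq h0, sqrt_sq (h.action_pos h0 hJ t).le]

theorem arrivalTime_angle (h : IsPendulumSolution θ J) (h0 : θ 0 = 0) (hJ : 2 < J 0) (t : ℝ) :
    arrivalTime (J 0) (θ t) = t := by
  have hderiv (s : ℝ) : HasDerivAt (fun s => arrivalTime (J 0) (θ s) - s) 0 s := by
    refine (((hasDerivAt_arrivalTime hJ (θ s)).comp s (h.hasDerivAt_angle s)).sub
      (hasDerivAt_id s)).congr_deriv ?_
    rw [h.rotationalSpeed_angle h0 hJ, inv_mul_cancel₀ (h.action_pos h0 hJ s).ne', sub_self]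
  have hconst := is_const_of_deriv_eq_zero (fun s => (hderiv s).differentiableAt)
    (fun s => (hderiv s).deriv) t 0
  rwa [h0, arrivalTime_zero, sub_zero, sub_eq_zero] at hconst

end IsPendulumSolution

section Separatrix

/-- The angle at time `s` of the pendulum's upper separatrix orbit that starts over the angle `0`:
the solution of `θ' = 2 cos (πθ)`, `θ 0 = 0`. -/
def separatrixAngle (s : ℝ) : ℝ := -(1 / 2) + (2 / π) * arctan (exp (2 * π * s))

theorem separatrixAngle_zero : separatrixAngle 0 = 0 := by
  rw [separatrixAngle, mul_zero, exp_zero, arctan_one]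
  field_simp
  norm_num

theorem separatrixAngle_one_half : separatrixAngle (1 / 2) = sigmaConst := by
  rw [separatrixAngle, sigmaConst, mul_one_div, mul_div_cancel_left₀ π two_ne_zero]

theorem strictMono_separatrixAngle : StrictMono separatrixAngle := by
  intro s t hst
  unfold separatrixAngle
  gcongr

theorem separatrixAngle_pos {s : ℝ} (hs : 0 < s) : 0 < separatrixAngle s :=
  separatrixAngle_zero.symm.trans_lt (strictMono_separatrixAngle hs)

theorem separatrixAngle_lt_one_half (s : ℝ) : separatrixAngle s < 1 / 2 := by
  calc separatrixAngle s < -(1 / 2) + (2 / π) * (π / 2) := by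
        unfold separatrixAngle
        gcongr
        exact arctan_lt_pi_div_two _
    _ = 1 / 2 := by
        field_simp
        norm_num

theorem cos_pi_mul_separatrixAngle (s : ℝ) :
    cos (π * separatrixAngle s) = 2 * exp (2 * π * s) / (1 + exp (2 * π * s) ^ 2) := by
  have hangle : π * separatrixAngle s = 2 * arctan (exp (2 * π * s)) - π / 2 := by
    unfold separatrixAngle
    field_simp
    ring
  rw [hangle, cos_sub_pi_div_two, sin_two_mul, sin_arctan, cos_arctan, mul_assoc,
    div_mul_div_comm, mul_one, mul_self_sqrt (by positivity), mul_div_assoc]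

theorem hasDerivAt_separatrixAngle (s : ℝ) :
    HasDerivAt separatrixAngle (2 * cos (π * separatrixAngle s)) s := by
  have hexp := ((hasDerivAt_id s).const_mul (2 * π)).exp
  refine ((hexp.arctan.const_mul (2 / π)).const_add (-(1 / 2))).congr_deriv ?_
  rw [cos_pi_mul_separatrixAngle]
  simp only [id]
  field_simp

theorem arrivalTime_separatrixAngle_lt {I₀ s : ℝ} (hI₀ : 2 < I₀) (hs : 0 < s) :
    arrivalTime I₀ (separatrixAngle s) < s := by
  have hmono : StrictMono fun u => u - arrivalTime I₀ (separatrixAngle u) := by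
    refine strictMono_of_hasDerivAt_pos (fun u => (hasDerivAt_id u).sub
      ((hasDerivAt_arrivalTime hI₀ _).comp u (hasDerivAt_separatrixAngle u))) fun u => ?_
    rw [sub_pos, inv_mul_lt_one₀ (rotationalSpeed_pos hI₀ _)]
    exact two_mul_cos_lt_rotationalSpeed hI₀ _
  simpa [separatrixAngle_zero, arrivalTime_zero] using hmono hs

end Separatrix

theorem IsPendulumSolution.angle_mem_Ioo {θ J : ℝ → ℝ} (h : IsPendulumSolution θ J)
    (h0 : θ 0 = 0) (hJ : 2 < J 0) {s t : ℝ} (hs : 0 < s)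
    (ht : t ∈ Set.Icc s (traversalTime (J 0) - s)) :
    θ t ∈ Set.Ioo (separatrixAngle s) (1 - separatrixAngle s) := by
  have hlt := arrivalTime_separatrixAngle_lt hJ hs
  constructor <;>
    rw [← (strictMono_arrivalTime hJ).lt_iff_lt, h.arrivalTime_angle h0 hJ]
  · exact hlt.trans_le ht.1
  · rw [arrivalTime_one_sub hJ]
    linarith [ht.2]

theorem pendulum_avoids_arc_general {s : ℝ} (hs : 0 < s) :
    (0 < separatrixAngle s ∧ separatrixAngle s < 1 / 2) ∧
    ∀ Φ : ℝ → T1 × ℝ → T1 × ℝ, IsHamFlow1 Pend Φ →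
      ∀ I₀ : ℝ, 2 < I₀ → ∀ t ∈ Set.Icc s (traversalTime I₀ - s),
        (Φ t (((0 : ℝ) : T1), I₀)).1 ∉
          (fun r : ℝ => (r : T1)) '' Set.Icc (-separatrixAngle s) (separatrixAngle s) := by
  refine ⟨⟨separatrixAngle_pos hs, separatrixAngle_lt_one_half s⟩, fun Φ hΦ I₀ hI₀ t ht => ?_⟩
  obtain ⟨θ, J, hsol, h0, rfl, hflow⟩ := hΦ.exists_isPendulumSolution 0 I₀
  obtain ⟨hlow, hup⟩ := hsol.angle_mem_Ioo h0 hI₀ hs ht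
  rw [hflow t]
  exact coe_notMem_image_coe_Icc hlow (by linarith)

/-- Along the `M`-periodic rotational orbit of the pendulum through `(0, I_M)`, the angle
`θ_M(t)` stays outside the arc `[−σ, σ] (mod 1)` for all `t ∈ [1/2, M − 1/2]`, where
`σ = −1/2 + (2/π)·arctan(e^π) ∈ (0, 1/2)`. -/
theorem pendulum_avoids_arc :
    (0 < sigmaConst ∧ sigmaConst < 1 / 2) ∧
    ∀ Φ : ℝ → T1 × ℝ → T1 × ℝ, IsHamFlow1 Pend Φ →
      ∀ M : ℕ, 1 ≤ M → ∀ I₀ ∈ Set.Ioo (2 : ℝ) 3, traversalTime I₀ = M →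
        ∀ t ∈ Set.Icc (1 / 2 : ℝ) ((M : ℝ) - 1 / 2),
          (Φ t (((0 : ℝ) : T1), I₀)).1 ∉
            (fun r : ℝ => (r : T1)) '' Set.Icc (-sigmaConst) sigmaConst := by
  rw [← separatrixAngle_one_half]
  obtain ⟨hσ, havoid⟩ := pendulum_avoids_arc_general one_half_pos
  exact ⟨hσ, fun Φ hΦ M _ I₀ hI₀ hT t ht => havoid Φ hΦ I₀ hI₀.1 t (hT ▸ ht)⟩
end
end
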